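/- With β > 0, γ ∈ (0,1), r_n the unique solution in (0,1) of βγr_n/(1−r_n)^{γ+1} = n, and B(r) = βγ r (1+γ r)/(1−r)^{γ+2}, we have B(r_n) ~ (1+γ)(βγ)^{−1/(γ+1)} n^{(γ+2)/(γ+1)} as n → ∞. -/

import Mathlib

/-!
Write `c = β γ`, `x = r n` and `s = 1 / (γ + 1)`. Substituting `n = c x / (1 - x) ^ (γ + 1)` into
`n ^ ((γ + 2) / (γ + 1)) = n * n ^ s` cancels every power of `1 - x` and of `c`, so the quotient
in question equals `(1 + γ x) / ((1 + γ) x ^ s)` exactly (`ratio_eq`). This is continuous at `x = 1`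
with value `1`, and `r n → 1` because `1 - r n = (c x / n) ^ s ≤ (c / n) ^ s`
(`one_sub_le`).
-/

open Set Filter

/-- The defining equation `N = c x / (1 - x) ^ (γ + 1)`, raised to the power `1 / (γ + 1)`. -/
lemma rpow_of_saddle {c γ x N : ℝ} (hc : 0 < c) (hγ : 0 < γ) (hx : x ∈ Ioo (0 : ℝ) 1)
    (h : c * x / (1 - x) ^ (γ + 1) = N) :
    N ^ (1 / (γ + 1)) = c ^ (1 / (γ + 1)) * x ^ (1 / (γ + 1)) / (1 - x) := by
  have hu : 0 < 1 - x := sub_pos.2 hx.2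
  have hx0 := hx.1
  rw [← h, Real.div_rpow (by positivity) (by positivity), Real.mul_rpow hc.le hx0.le,
    ← Real.rpow_mul hu.le, mul_one_div_cancel (by positivity), Real.rpow_one]

lemma one_sub_le {c γ x N : ℝ} (hc : 0 < c) (hγ : 0 < γ) (hN : 0 < N) (hx : x ∈ Ioo (0 : ℝ) 1)
    (h : c * x / (1 - x) ^ (γ + 1) = N) : 1 - x ≤ (c / N) ^ (1 / (γ + 1)) := by
  have hu : 0 < 1 - x := sub_pos.2 hx.2
  have h1 := rpow_of_saddle hc hγ hx h
  have hx1 : x ^ (1 / (γ + 1)) ≤ 1 := Real.rpow_le_one hx.1.le hx.2.le (by positivity)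
  have hC : 0 < c ^ (1 / (γ + 1)) := by positivity
  have hM : 0 < N ^ (1 / (γ + 1)) := by positivity
  rw [Real.div_rpow hc.le hN.le, le_div_iff₀ hM, h1, mul_div_cancel₀ _ hu.ne']
  exact mul_le_of_le_one_right hC.le hx1

lemma ratio_eq {c γ x N : ℝ} (hc : 0 < c) (hγ : 0 < γ) (hN : 0 < N) (hx : x ∈ Ioo (0 : ℝ) 1)
    (h : c * x / (1 - x) ^ (γ + 1) = N) :
    c * x * (1 + γ * x) / (1 - x) ^ (γ + 2) /
        ((1 + γ) * c ^ (-(1 / (γ + 1))) * N ^ ((γ + 2) / (γ + 1))) =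
      (1 + γ * x) / ((1 + γ) * x ^ (1 / (γ + 1))) := by
  have hu : 0 < 1 - x := sub_pos.2 hx.2
  have hx0 := hx.1
  have he : (γ + 2) / (γ + 1) = 1 + 1 / (γ + 1) := by field_simp; ring
  rw [he, Real.rpow_add hN, Real.rpow_one, rpow_of_saddle hc hγ hx h, Real.rpow_neg hc.le, ← h,
    show γ + 2 = (γ + 1) + 1 by ring, Real.rpow_add hu, Real.rpow_one]
  have hC : 0 < c ^ (1 / (γ + 1)) := by positivity
  have hX : 0 < x ^ (1 / (γ + 1)) := by positivity
  have hU : 0 < (1 - x) ^ (γ + 1) := by positivity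
  generalize c ^ (1 / (γ + 1)) = C at *
  generalize x ^ (1 / (γ + 1)) = X at *
  generalize (1 - x) ^ (γ + 1) = U at *
  generalize 1 - x = u at *
  field_simp

/-- `B(r_n) ~ (1+γ)(βγ)^(-1/(γ+1)) n^((γ+2)/(γ+1))` as `n → ∞`. -/
theorem stmt_13 (β γ : ℝ) (hβ : 0 < β) (hγ : γ ∈ Ioo (0 : ℝ) 1)
    (r : ℕ → ℝ) (hr : ∀ n : ℕ, 1 ≤ n → r n ∈ Ioo (0 : ℝ) 1 ∧
      β * γ * r n / (1 - r n) ^ (γ + 1) = n)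
    (B : ℝ → ℝ) (hB : ∀ t : ℝ, B t = β * γ * t * (1 + γ * t) / (1 - t) ^ (γ + 2)) :
    Tendsto (fun n : ℕ =>
        B (r n) /
          ((1 + γ) * (β * γ) ^ (-(1 / (γ + 1))) * (n : ℝ) ^ ((γ + 2) / (γ + 1))))
      atTop (nhds 1) := by
  have hγ0 := hγ.1
  have hc : 0 < β * γ := mul_pos hβ hγ0
  have hs : 0 < 1 / (γ + 1) := by positivity
  have hbound : Tendsto (fun n : ℕ => (β * γ / (n : ℝ)) ^ (1 / (γ + 1))) atTop (nhds 0) := by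
    have := (tendsto_const_div_atTop_nhds_zero_nat (β * γ)).rpow_const
      (p := 1 / (γ + 1)) (Or.inr hs.le)
    rwa [Real.zero_rpow hs.ne'] at this
  have hu : Tendsto (fun n => 1 - r n) atTop (nhds 0) := by
    refine squeeze_zero' ?_ ?_ hbound
    · filter_upwards [eventually_ge_atTop 1] with n hn
      exact (sub_pos.2 (hr n hn).1.2).le
    · filter_upwards [eventually_ge_atTop 1] with n hn
      exact one_sub_le hc hγ0 (Nat.cast_pos.2 hn) (hr n hn).1 (hr n hn).2
  have hr1 : Tendsto r atTop (nhds 1) := by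
    simpa using hu.const_sub 1
  have hlim : Tendsto (fun n => (1 + γ * r n) / ((1 + γ) * r n ^ (1 / (γ + 1)))) atTop
      (nhds 1) := by
    have hne : (1 + γ) * (1 : ℝ) ^ (1 / (γ + 1)) ≠ 0 := by positivity
    have := ((hr1.const_mul γ).const_add 1).div
      ((hr1.rpow_const (p := 1 / (γ + 1)) (Or.inr hs.le)).const_mul (1 + γ)) hne
    rwa [Real.one_rpow, mul_one, mul_one, div_self (by positivity)] at this
  refine hlim.congr' ?_
  filter_upwards [eventually_ge_atTop 1] with n hn
  rw [hB, ratio_eq hc hγ0 (Nat.cast_pos.2 hn) (hr n hn).1 (hr n hn).2]
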